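/- Let R be a local ring with finitely generated regular maximal ideal M such that M = √(mR) for some m ∈ M. Let R' be the integral closure of R in the Nagata transform T(M), let C = ∩_{i>0} m^i R and C' = ∩_{i>0} m^i R'. Then √C = C' ∩ R, and there is an integer k > 0 such that (C' ∩ R)^k ⊆ C. -/

import Mathlib

/-!
Write `M` for the maximal ideal. The element `m` is regular, since it divides a power of a regular
element of `M = √(m)`, and every power `m ^ i R` contains a power of `M` because `M` is finitely
generated.

If `x ^ n ∈ C`, then for each `i` the fraction `x / m ^ i` lies in `T(M)` (as `M ^ K ⊆ m ^ i R`)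
and one of its powers lies in `R`; hence it lies in `R'`, so `x ∈ m ^ i R'`. This is `√C ⊆ C' ∩ R`.

For the rest, let `l` be the length of `R / m R`, which is finite. If an ideal `I` contains a power
of `m`, then `R / I` has finite length and
`length (I / M I) = length (R / M I) - length (R / I) ≤ length (R / m I) - length (R / I) = l`,
so `I` has at most `l` generators (`spanFinrank_le_length`). Now let `x ∈ m ^ i R' ∩ R`, say
`x = m ^ i y` with `y` integral over `R`. An integral equation for `y` shows that
`N = (x, m ^ i) ^ n` satisfies `x N ⊆ m ^ i N` for large `n`, and the determinant trick on at most
`l` generators of `N` gives `x ^ l ∈ m ^ i R`: the exponent does not depend on `x` or `i`. As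
`m ^ i R' ∩ R` itself has at most `l` generators, its power `l * l + 1` lies in `m ^ i R`
(`comap_span_pow_le`). Intersecting over `i` gives `(C' ∩ R) ^ (l * l + 1) ⊆ C`, which also yields
`C' ∩ R ⊆ √C`.
-/

set_option synthInstance.maxHeartbeats 2000000
set_option maxHeartbeats 2000000

open scoped nonZeroDivisors

/-- The Nagata transform `T(I) = ⋃_{k>0} (R :_{Q(R)} I^k)` of an ideal `I`, as a subalgebra
of the total quotient ring of `R`.  (The union is already a subring containing `R`, so
taking `Algebra.adjoin` of it does not change the underlying set.) -/
def nagataTransform (R : Type*) [CommRing R] (I : Ideal R) :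
    Subalgebra R (Localization R⁰) :=
  Algebra.adjoin R (⋃ k : ℕ,
    ((1 / IsLocalization.coeSubmodule (Localization R⁰) (I ^ (k + 1)) :
      Submodule R (Localization R⁰)) : Set (Localization R⁰)))

/-! ### The determinant trick with a bound on the degree -/

open Polynomial in
/-- An integral equation for `y` with `a * y = x` yields `x N ⊆ a N` for some `N = (x, a) ^ n`. -/
theorem exists_span_pow_le_of_isIntegral {R S : Type*} [CommRing R] [Nontrivial R]
    [CommRing S] [Algebra R S] (hinj : Function.Injective (algebraMap R S))
    {a x : R} {y : S} (hy : IsIntegral R y)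
    (hxy : algebraMap R S x = algebraMap R S a * y) :
    ∃ n : ℕ, ∀ z ∈ Ideal.span {x, a} ^ n, x * z ∈ Ideal.span {a} * Ideal.span {x, a} ^ n := by
  obtain ⟨p, hp, hpy⟩ := hy
  set I : Ideal R := Ideal.span {x, a} with hI
  have hxI : x ∈ I := Ideal.subset_span (by simp)
  have haI : a ∈ I := Ideal.subset_span (by simp)
  -- Multiplying by `X` makes the degree positive.
  set q : R[X] := p * X with hq
  have hqm : q.Monic := hp.mul monic_X
  have hqd : q.natDegree = p.natDegree + 1 := by
    rw [hq, natDegree_mul_X hp.ne_zero]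
  set n := p.natDegree
  have hqy : aeval y q = 0 := by
    rw [hq, map_mul, aeval_def, hpy, zero_mul]
  have hqx : (q.scaleRoots a).eval x = 0 := by
    apply hinj
    have h := scaleRoots_aeval_eq_zero (r := a) hqy
    rw [← hxy, aeval_algebraMap_apply] at h
    simpa using h
  have hxn : x ^ (n + 1) ∈ Ideal.span {a} * I ^ n := by
    rw [eval_eq_sum_range, natDegree_scaleRoots, hqd, Finset.sum_range_succ] at hqx
    have h1 : (q.scaleRoots a).coeff (n + 1) = 1 := by
      rw [coeff_scaleRoots, hqd, ← hqd, hqm.coeff_natDegree]; simp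
    rw [h1, one_mul] at hqx
    rw [eq_neg_of_add_eq_zero_right hqx]
    refine neg_mem (Ideal.sum_mem _ fun k hk => ?_)
    have hk' : k ≤ n := by simpa [Nat.lt_succ_iff] using hk
    rw [coeff_scaleRoots, hqd, show n + 1 - k = (n - k) + 1 by omega]
    have : q.coeff k * a ^ (n - k + 1) * x ^ k = a * (q.coeff k * (a ^ (n - k) * x ^ k)) := by ring
    rw [this]
    refine Ideal.mul_mem_mul (Ideal.mem_span_singleton_self a) (Ideal.mul_mem_left _ _ ?_)
    have h2 := Ideal.mul_mem_mul (Ideal.pow_mem_pow haI (n - k)) (Ideal.pow_mem_pow hxI k)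
    rwa [← pow_add, Nat.sub_add_cancel hk'] at h2
  -- A monomial of degree `j + 1` in `x` and `a` is `x ^ (j + 1)` or is divisible by `a`.
  have key : ∀ j : ℕ, I ^ (j + 1) ≤ Ideal.span {x ^ (j + 1)} ⊔ Ideal.span {a} * I ^ j := by
    have hIsup : I = Ideal.span {x} ⊔ Ideal.span {a} := by rw [hI, Ideal.span_insert]
    intro j
    induction j with
    | zero => simp [hIsup]
    | succ j ih =>
      have h1 : I ^ (j + 1 + 1) = Ideal.span {x} * I ^ (j + 1) ⊔ Ideal.span {a} * I ^ (j + 1) := by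
        rw [← Ideal.sup_mul, ← hIsup, pow_succ']
      rw [h1]
      refine sup_le ((Ideal.mul_mono_right ih).trans ?_) le_sup_right
      rw [Ideal.mul_sup]
      refine sup_le_sup ?_ ?_
      · rw [Ideal.span_singleton_mul_span_singleton, ← pow_succ']
      · rw [mul_left_comm]
        refine Ideal.mul_mono_right ?_
        rw [pow_succ' I]
        exact Ideal.mul_mono_left (by simpa using hxI)
  refine ⟨n, fun z hz => ?_⟩
  have h := key n (by rw [pow_succ']; exact Ideal.mul_mem_mul hxI hz)
  refine (sup_le ?_ le_rfl : _ ⊔ _ ≤ Ideal.span {a} * I ^ n) h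
  simpa using hxn

open Polynomial in
/-- The determinant trick: if `x N ⊆ J N` and `N` contains a regular element, then `x ^ l ∈ J` for
every `l` that is at least the number of generators of `N`. -/
theorem pow_mem_of_mul_mem {R : Type*} [CommRing R] {N J : Ideal R} (hN : N.FG) {c x : R}
    (hc : c ∈ R⁰) (hcN : c ∈ N) (hx : ∀ z ∈ N, x * z ∈ J * N) {l : ℕ}
    (hl : N.spanFinrank ≤ l) : x ^ l ∈ J := by
  have : Module.Finite R N := Module.Finite.iff_fg.mpr hN
  have hmap : Submodule.map N.subtype (J • ⊤) = J * N := by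
    rw [Submodule.map_smul'', Submodule.map_subtype_top, smul_eq_mul]
  obtain ⟨p, hp, hpd, hpc, hp0⟩ :=
    LinearMap.exists_monic_and_natDegree_eq_and_coeff_mem_pow_and_aeval_eq_zero R
      (algebraMap R (Module.End R N) x) J (by
        rintro _ ⟨z, rfl⟩
        have h := hx z z.2
        rw [← hmap] at h
        obtain ⟨w, hw, hwz⟩ := h
        have hwe : w = algebraMap R (Module.End R N) x z := Subtype.ext hwz
        rwa [← hwe])
  rw [Submodule.spanFinrank_top] at hpd
  rw [aeval_algebraMap_apply] at hp0
  have h0 : p.eval x = 0 := by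
    have h1 := congrArg Subtype.val (LinearMap.congr_fun hp0 ⟨c, hcN⟩)
    have h2 : p.eval x * c = 0 := by simpa using h1
    exact (mem_nonZeroDivisors_iff_right.mp hc) _ h2
  rw [eval_eq_sum_range, Finset.sum_range_succ, hp.coeff_natDegree, one_mul] at h0
  have hd : x ^ p.natDegree ∈ J := by
    rw [eq_neg_of_add_eq_zero_right h0]
    refine neg_mem (Ideal.sum_mem _ fun k hk => Ideal.mul_mem_right _ _ ?_)
    have : p.natDegree - k ≠ 0 := by have := Finset.mem_range.mp hk; omega
    exact Ideal.pow_le_self this (hpc k)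
  exact Ideal.mem_of_dvd J (pow_dvd_pow x (hpd.trans_le hl)) hd

theorem span_pow_le_of_forall_pow_mem {R : Type*} [CommRing R] {J : Ideal R} {l : ℕ}
    (t : Finset R) (ht : ∀ x ∈ t, x ^ l ∈ J) :
    Ideal.span (t : Set R) ^ (t.card * l + 1) ≤ J := by
  classical
  induction t using Finset.induction_on with
  | empty => simp
  | insert a t ha ih =>
    rw [Finset.card_insert_of_notMem ha, Finset.coe_insert, Ideal.span_insert,
      show (t.card + 1) * l + 1 = l + (t.card * l + 1) by ring]
    refine (Ideal.sup_pow_add_le_pow_sup_pow).trans (sup_le ?_ ?_)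
    · rw [Ideal.span_singleton_pow, Ideal.span_singleton_le_iff_mem]
      exact ht a (by simp)
    · exact ih fun x hx => ht x (by simp [hx])

/-! ### Lengths and numbers of generators in a local ring whose maximal ideal is `√(m)` -/

/-- Additivity of length on `0 → R / I → R / m I → R / m R → 0`, whose first map is multiplication
by `m`. -/
theorem length_quotient_span_mul {R : Type*} [CommRing R] {m : R} (hm : m ∈ R⁰) (I : Ideal R) :
    Module.length R (R ⧸ Ideal.span {m} * I) =
      Module.length R (R ⧸ I) + Module.length R (R ⧸ Ideal.span {m}) := by
  have hle : I ≤ Submodule.comap (LinearMap.mulLeft R m) (Ideal.span {m} * I) := fun z hz =>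
    Ideal.mul_mem_mul (Ideal.mem_span_singleton_self m) hz
  refine Module.length_eq_add_of_exact
    (Submodule.mapQ _ _ (LinearMap.mulLeft R m) hle) (Submodule.factor Ideal.mul_le_left) ?_
    (Submodule.factor_surjective _) ?_
  · rw [← LinearMap.ker_eq_bot, LinearMap.ker_eq_bot']
    intro z hz
    obtain ⟨z, rfl⟩ := Submodule.Quotient.mk_surjective _ z
    rw [Submodule.mapQ_apply, Submodule.Quotient.mk_eq_zero, LinearMap.mulLeft_apply,
      Ideal.mem_span_singleton_mul] at hz
    obtain ⟨w, hw, hwz⟩ := hz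
    rw [mul_cancel_left_mem_nonZeroDivisors hm] at hwz
    rw [Submodule.Quotient.mk_eq_zero, ← hwz]
    exact hw
  · have hrange : LinearMap.range (LinearMap.mulLeft R m) = Ideal.span {m} := by
      ext z
      simp [Ideal.mem_span_singleton, dvd_def, eq_comm]
    rw [LinearMap.exact_iff, Submodule.range_mapQ, hrange, Submodule.factor, Submodule.ker_mapQ,
      Submodule.comap_id]

section Local

variable {R : Type*} [CommRing R] [IsLocalRing R]

open IsLocalRing

theorem quotient_isArtinianRing (hfg : (maximalIdeal R).FG) {m : R}
    (hrad : maximalIdeal R = (Ideal.span {m}).radical) {I : Ideal R} {b : ℕ} (hb : m ^ b ∈ I) :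
    IsArtinianRing (R ⧸ I) := by
  -- The maximal ideal is the only prime containing a power of `m`.
  have key : ∀ P : Ideal (R ⧸ I), P.IsPrime → P.comap (Ideal.Quotient.mk I) = maximalIdeal R := by
    intro P hP
    have hPc : (P.comap (Ideal.Quotient.mk I)).IsPrime := Ideal.comap_isPrime _ _
    refine le_antisymm (le_maximalIdeal hPc.ne_top) ?_
    rw [hrad, hPc.radical_le_iff, Ideal.span_singleton_le_iff_mem]
    refine hPc.mem_of_pow_mem b ?_
    rw [Ideal.mem_comap, Ideal.Quotient.eq_zero_iff_mem.mpr hb]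
    exact P.zero_mem
  have hmap : ∀ P : Ideal (R ⧸ I), P.IsPrime →
      P = (maximalIdeal R).map (Ideal.Quotient.mk I) := fun P hP => by
    rw [← key P hP, Ideal.map_comap_of_surjective _ Ideal.Quotient.mk_surjective]
  have : IsNoetherianRing (R ⧸ I) := IsNoetherianRing.of_prime fun P hP => by
    rw [hmap P hP]
    exact hfg.map _
  have : Ring.KrullDimLE 0 (R ⧸ I) := by
    rw [Ring.krullDimLE_zero_iff]
    intro P hP
    obtain ⟨Q, hQ, hPQ⟩ := Ideal.exists_le_maximal P hP.ne_top
    rwa [(hmap P hP).trans (hmap Q hQ.isPrime).symm]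
  exact IsNoetherianRing.isArtinianRing_of_krullDimLE_zero

theorem length_quotient_ne_top (hfg : (maximalIdeal R).FG) {m : R}
    (hrad : maximalIdeal R = (Ideal.span {m}).radical) {I : Ideal R} {b : ℕ} (hb : m ^ b ∈ I) :
    Module.length R (R ⧸ I) ≠ ⊤ := by
  have := quotient_isArtinianRing hfg hrad hb
  rw [Module.length_eq_of_surjective (R := R ⧸ I) (Ideal.Quotient.mk_surjective)]
  exact Module.length_ne_top

/-- `I` is finitely generated since its image in the Noetherian ring `R / m ^ b R` is. -/
theorem fg_of_pow_mem (hfg : (maximalIdeal R).FG) {m : R}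
    (hrad : maximalIdeal R = (Ideal.span {m}).radical) {I : Ideal R} {b : ℕ} (hb : m ^ b ∈ I) :
    I.FG := by
  have := quotient_isArtinianRing (I := Ideal.span {m ^ b}) (b := b) hfg hrad
    (Ideal.mem_span_singleton_self _)
  refine Ideal.fg_of_fg_map_of_fg_inf_ker_of_surjective
    (f := Ideal.Quotient.mk (Ideal.span {m ^ b})) (IsNoetherian.noetherian _) ?_
    Ideal.Quotient.mk_surjective
  rw [Ideal.mk_ker, inf_eq_right.mpr (by simpa using hb)]
  exact ⟨{m ^ b}, by simp⟩

/-- Additivity of length on `0 → I / M I → R / M I → R / I → 0`. -/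
theorem length_quotient_maximalIdeal_mul (I : Ideal R) :
    Module.length R (R ⧸ maximalIdeal R * I) =
      Module.length R (I ⧸ (maximalIdeal R • ⊤ : Submodule R I)) + Module.length R (R ⧸ I) := by
  have hcomap : Submodule.comap I.subtype (maximalIdeal R * I) =
      (maximalIdeal R • ⊤ : Submodule R I) := by
    have hmap : Submodule.map I.subtype (maximalIdeal R • ⊤) = maximalIdeal R * I := by
      rw [Submodule.map_smul'', Submodule.map_subtype_top, smul_eq_mul]
    rw [← hmap, Submodule.comap_map_eq_of_injective I.subtype_injective]
  refine Module.length_eq_add_of_exact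
    (Submodule.mapQ _ _ I.subtype hcomap.ge) (Submodule.factor Ideal.mul_le_right) ?_
    (Submodule.factor_surjective _) ?_
  · rw [← LinearMap.ker_eq_bot, Submodule.ker_mapQ, hcomap, Submodule.mkQ_map_self]
  · rw [LinearMap.exact_iff, Submodule.range_mapQ, Submodule.range_subtype, Submodule.factor,
      Submodule.ker_mapQ, Submodule.comap_id]

/-- An ideal containing a power of the regular element `m` has at most `length (R / m R)`
generators: compare `M I` with `m I`. -/
theorem spanFinrank_le_length (hfg : (maximalIdeal R).FG) {m : R}
    (hm : m ∈ R⁰) (hrad : maximalIdeal R = (Ideal.span {m}).radical) {I : Ideal R} {b : ℕ}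
    (hb : m ^ b ∈ I) : (I.spanFinrank : ℕ∞) ≤ Module.length R (R ⧸ Ideal.span {m}) := by
  have hI := fg_of_pow_mem hfg hrad hb
  have hmM : Ideal.span {m} ≤ maximalIdeal R := hrad ▸ Ideal.le_radical
  have : Module.Finite R I := Module.Finite.iff_fg.mpr hI
  have h1 : (I.spanFinrank : ℕ∞) =
      Module.length R (I ⧸ (maximalIdeal R • ⊤ : Submodule R I)) := by
    rw [spanFinrank_eq_finrank_quotient I hI]
    let : Field (R ⧸ maximalIdeal R) := Ideal.Quotient.field _
    rw [Module.length_eq_of_surjective (R := R ⧸ maximalIdeal R) Ideal.Quotient.mk_surjective]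
    have : Module.Finite (R ⧸ maximalIdeal R) (I ⧸ (maximalIdeal R • ⊤ : Submodule R I)) :=
      Module.Finite.of_restrictScalars_finite R _ _
    rw [Module.length_eq_finrank]
  have h2 : Module.length R (R ⧸ maximalIdeal R * I) ≤
      Module.length R (R ⧸ Ideal.span {m} * I) :=
    Module.length_le_of_surjective (Submodule.factor (Ideal.mul_mono_left hmM))
      (Submodule.factor_surjective _)
  rw [length_quotient_maximalIdeal_mul, length_quotient_span_mul hm, add_comm, ← h1] at h2
  exact (ENat.add_le_add_iff_left (length_quotient_ne_top hfg hrad hb)).mp h2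

/-! ### Contractions from integral extensions -/

/-- The contraction of `m ^ b S` has at most `l` generators, and the `l`-th power of each of its
elements lies in `m ^ b R`, whence an exponent independent of `b`. -/
theorem comap_span_pow_le {S : Type*} [CommRing S] [Algebra R S] [Algebra.IsIntegral R S]
    (hinj : Function.Injective (algebraMap R S)) (hfg : (maximalIdeal R).FG) {m : R}
    (hm : m ∈ R⁰) (hrad : maximalIdeal R = (Ideal.span {m}).radical) {l : ℕ}
    (hl : (l : ℕ∞) = Module.length R (R ⧸ Ideal.span {m})) (b : ℕ) :
    ((Ideal.span {algebraMap R S (m ^ b)}).comap (algebraMap R S)) ^ (l * l + 1) ≤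
      Ideal.span {m ^ b} := by
  have hgen : ∀ {I : Ideal R} {c : ℕ}, m ^ c ∈ I → I.spanFinrank ≤ l := fun {I c} hc => by
    have h := spanFinrank_le_length hfg hm hrad hc
    rw [← hl] at h
    exact_mod_cast h
  set a := m ^ b with ha
  set I : Ideal R := (Ideal.span {algebraMap R S a}).comap (algebraMap R S) with hI
  have haI : m ^ b ∈ I := Ideal.mem_span_singleton_self _
  have hxI : ∀ x ∈ I, x ^ l ∈ Ideal.span {a} := by
    intro x hx
    obtain ⟨y, hy⟩ := Ideal.mem_span_singleton.mp (Ideal.mem_comap.mp hx)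
    obtain ⟨n, hn⟩ :=
      exists_span_pow_le_of_isIntegral hinj (Algebra.IsIntegral.isIntegral (R := R) y) hy
    have haN : m ^ (b * n) ∈ Ideal.span {x, a} ^ n := by
      rw [pow_mul]
      exact Ideal.pow_mem_pow (Ideal.subset_span (by simp [ha])) n
    exact pow_mem_of_mul_mem (fg_of_pow_mem hfg hrad haN) (pow_mem hm _) haN hn (hgen haN)
  obtain ⟨t, htc, htI⟩ :=
    Submodule.FG.exists_span_finset_card_eq_spanFinrank (fg_of_pow_mem hfg hrad haI)
  have ht := span_pow_le_of_forall_pow_mem (J := Ideal.span {a}) (l := l) t fun x hx =>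
    hxI x (htI ▸ Submodule.subset_span hx)
  have htI' : Ideal.span (t : Set R) = I := htI
  rw [htI', htc] at ht
  refine (Ideal.pow_le_pow_right ?_).trans ht
  gcongr
  exact hgen haI

end Local

/-- The statement for any integral extension `S` of `R` that contains those fractions `x / a` with
`M ^ K ⊆ a R` which have a power in `R`. -/
theorem radical_eq_comap_and_pow_le {R S : Type*} [CommRing R] [IsLocalRing R] [CommRing S]
    [Algebra R S] [Algebra.IsIntegral R S] (hinj : Function.Injective (algebraMap R S))
    (hS : ∀ (a x : R) (K n : ℕ), a ∈ R⁰ → IsLocalRing.maximalIdeal R ^ K ≤ Ideal.span {a} →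
      x ^ (n + 1) ∈ Ideal.span {a ^ (n + 1)} →
      algebraMap R S x ∈ Ideal.span {algebraMap R S a})
    (hfg : (IsLocalRing.maximalIdeal R).FG)
    (hreg : ∃ r ∈ IsLocalRing.maximalIdeal R, r ∈ R⁰)
    (m : R) (hrad : IsLocalRing.maximalIdeal R = (Ideal.span {m}).radical)
    (C : Ideal R) (hC : C = ⨅ i : ℕ, Ideal.span {m} ^ (i + 1))
    (C' : Ideal S) (hC' : C' = ⨅ i : ℕ, Ideal.span {algebraMap R S m} ^ (i + 1)) :
    C.radical = C'.comap (algebraMap R S) ∧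
    ∃ k : ℕ, 0 < k ∧ (C'.comap (algebraMap R S)) ^ k ≤ C := by
  -- `m` is regular since it divides a power of the regular element `r`.
  have hmreg : m ∈ R⁰ := by
    obtain ⟨r, hr, hr0⟩ := hreg
    rw [hrad] at hr
    obtain ⟨n, hn⟩ := hr
    obtain ⟨s, hs⟩ := Ideal.mem_span_singleton.mp hn
    have h : m * s ∈ R⁰ := hs ▸ pow_mem hr0 n
    exact (mul_mem_nonZeroDivisors.mp h).1
  have hmemC : ∀ x, x ∈ C ↔ ∀ i : ℕ, x ∈ Ideal.span {m ^ (i + 1)} := fun x => by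
    simp only [hC, Ideal.span_singleton_pow, Submodule.mem_iInf]
  have hmemC' : ∀ x, x ∈ C'.comap (algebraMap R _) ↔ ∀ i : ℕ,
      x ∈ (Ideal.span {algebraMap R S (m ^ (i + 1))}).comap
          (algebraMap R _) := fun x => by
    simp only [hC', Ideal.mem_comap, Ideal.span_singleton_pow, Submodule.mem_iInf, map_pow]
  obtain ⟨k, hk0, hk⟩ : ∃ k : ℕ, 0 < k ∧ (C'.comap (algebraMap R _)) ^ k ≤ C := by
    have hlen := length_quotient_ne_top (I := Ideal.span {m}) (b := 1) hfg hrad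
      (by simp [Ideal.mem_span_singleton_self m])
    refine ⟨(Module.length R (R ⧸ Ideal.span {m})).toNat *
      (Module.length R (R ⧸ Ideal.span {m})).toNat + 1, Nat.succ_pos _,
      fun z hz => (hmemC z).mpr fun i => ?_⟩
    exact comap_span_pow_le hinj hfg hmreg
      hrad (ENat.natCast_toNat hlen) (i + 1)
      (Ideal.pow_right_mono (fun x hx => (hmemC' x).mp hx i) _ hz)
  refine ⟨le_antisymm ?_ fun x hx => ⟨k, hk (Ideal.pow_mem_pow hx _)⟩, k, hk0, hk⟩
  rintro x ⟨n, hn⟩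
  refine (hmemC' x).mpr fun i => ?_
  obtain ⟨K, hK⟩ : ∃ K, IsLocalRing.maximalIdeal R ^ K ≤ Ideal.span {m ^ (i + 1)} := by
    refine Ideal.exists_pow_le_of_le_radical_of_fg ?_ hfg
    rw [← Ideal.span_singleton_pow, Ideal.radical_pow _ (Nat.succ_ne_zero i), ← hrad]
  refine hS _ _ K n (pow_mem hmreg _) hK ?_
  have h := (hmemC _).mp hn ((i + 1) * (n + 1) - 1)
  rw [Nat.sub_add_cancel (Nat.mul_pos i.succ_pos n.succ_pos), pow_mul] at h
  rw [pow_succ x]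
  exact Ideal.mul_mem_right _ _ h

/-- The statement for the integral closure of `R` in a subalgebra `T` of an extension `Q` of `R`,
where regular elements of `R` become units in `Q` and `T` contains the fractions `x / a` with
`M ^ K ⊆ a R`. Keeping `Q` abstract spares the elaborator from unfolding the ring structure on
`Localization R⁰`. -/
theorem radical_eq_comap_integralClosure_and_pow_le {R Q : Type*} [CommRing R] [IsLocalRing R]
    [CommRing Q] [Algebra R Q] (T : Subalgebra R Q) (hinj : Function.Injective (algebraMap R Q))
    (hunit : ∀ a ∈ R⁰, IsUnit (algebraMap R Q a))
    (hT : ∀ (a x : R) (K : ℕ), a ∈ R⁰ → IsLocalRing.maximalIdeal R ^ K ≤ Ideal.span {a} →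
      ∃ y ∈ T, algebraMap R Q a * y = algebraMap R Q x)
    (hfg : (IsLocalRing.maximalIdeal R).FG)
    (hreg : ∃ r ∈ IsLocalRing.maximalIdeal R, r ∈ R⁰)
    (m : R) (hrad : IsLocalRing.maximalIdeal R = (Ideal.span {m}).radical)
    (C : Ideal R) (hC : C = ⨅ i : ℕ, Ideal.span {m} ^ (i + 1))
    (C' : Ideal (integralClosure R T))
    (hC' : C' = ⨅ i : ℕ, Ideal.span {algebraMap R (integralClosure R T) m} ^ (i + 1)) :
    C.radical = C'.comap (algebraMap R (integralClosure R T)) ∧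
    ∃ k : ℕ, 0 < k ∧ (C'.comap (algebraMap R (integralClosure R T))) ^ k ≤ C := by
  refine radical_eq_comap_and_pow_le (S := integralClosure R T) ?_ ?_ hfg hreg m hrad C hC C' hC'
  · exact fun u v huv => hinj (congrArg Subtype.val (congrArg Subtype.val huv))
  intro a x K n ha hK hxa
  obtain ⟨y, hyT, hya⟩ := hT a x K ha hK
  -- `y = x / a` is integral over `R` because `y ^ (n + 1)` lies in `R`.
  have hyn : IsIntegral R (⟨y, hyT⟩ : T) := by
    obtain ⟨w, hw⟩ := Ideal.mem_span_singleton.mp hxa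
    refine IsIntegral.of_pow n.succ_pos ?_
    have hyw : (⟨y, hyT⟩ : T) ^ (n + 1) = algebraMap R _ w := by
      apply Subtype.ext
      refine (hunit _ (pow_mem ha (n + 1))).mul_left_cancel ?_
      change _ * y ^ (n + 1) = _ * algebraMap R Q w
      rw [← map_mul, ← hw, map_pow, ← mul_pow, hya, map_pow]
    rw [hyw]
    exact isIntegral_algebraMap
  refine Ideal.mem_span_singleton.mpr ⟨⟨⟨y, hyT⟩, hyn⟩, ?_⟩
  exact Subtype.ext (Subtype.ext hya.symm)

/-! ### The Nagata transform -/

/-- The fractions `x / a` with `I ^ K ⊆ a R` lie in `T(I)`, since `I ^ K (x / a) ⊆ R`. -/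
theorem exists_mem_nagataTransform {R : Type*} [CommRing R] {I : Ideal R} {a : R} (x : R) {K : ℕ}
    (ha : a ∈ R⁰) (hK : I ^ K ≤ Ideal.span {a}) :
    ∃ y ∈ nagataTransform R I,
      algebraMap R (Localization R⁰) a * y = algebraMap R (Localization R⁰) x := by
  have hya := IsLocalization.mk'_spec' (Localization R⁰) x ⟨a, ha⟩
  refine ⟨_, Algebra.subset_adjoin (Set.mem_iUnion.mpr ⟨K, ?_⟩), hya⟩
  rw [SetLike.mem_coe, Submodule.mem_div_iff_forall_mul_mem]
  rintro _ hz
  rw [IsLocalization.mem_coeSubmodule] at hz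
  obtain ⟨z, hz, rfl⟩ := hz
  obtain ⟨w, rfl⟩ := Ideal.mem_span_singleton.mp (hK (Ideal.pow_le_pow_right K.le_succ hz))
  rw [Submodule.mem_one]
  exact ⟨x * w, by rw [map_mul, map_mul, ← hya]; ring⟩

/-- Let `R` be a local ring with finitely generated regular maximal ideal `M = √(mR)`, let
`R'` be the integral closure of `R` in `T(M)`, let `C = ∩_{i>0} m^i R` and
`C' = ∩_{i>0} m^i R'`.  Then `√C = C' ∩ R` and there is `k > 0` with `(C' ∩ R)^k ⊆ C`. -/
theorem contraction_of_intersection_of_powers {R : Type*} [CommRing R] [IsLocalRing R]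
    (hfg : (IsLocalRing.maximalIdeal R).FG)
    (hreg : ∃ r ∈ IsLocalRing.maximalIdeal R, r ∈ R⁰)
    (m : R) (hm : m ∈ IsLocalRing.maximalIdeal R)
    (hrad : IsLocalRing.maximalIdeal R = (Ideal.span {m}).radical)
    (C : Ideal R) (hC : C = ⨅ i : ℕ, Ideal.span {m} ^ (i + 1))
    (C' : Ideal (integralClosure R (nagataTransform R (IsLocalRing.maximalIdeal R))))
    (hC' : C' = ⨅ i : ℕ,
      Ideal.span
        {algebraMap R (integralClosure R (nagataTransform R (IsLocalRing.maximalIdeal R))) m}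
        ^ (i + 1)) :
    C.radical =
      C'.comap
        (algebraMap R (integralClosure R (nagataTransform R (IsLocalRing.maximalIdeal R)))) ∧
    ∃ k : ℕ, 0 < k ∧
      (C'.comap
        (algebraMap R (integralClosure R (nagataTransform R (IsLocalRing.maximalIdeal R)))))
        ^ k ≤ C := by
  exact radical_eq_comap_integralClosure_and_pow_le (Q := Localization R⁰)
    (nagataTransform R (IsLocalRing.maximalIdeal R))
    (IsLocalization.injective (Localization R⁰) (le_refl R⁰))
    (fun a ha => IsLocalization.map_units _ (⟨a, ha⟩ : R⁰))
    (fun _ x _ ha hK => exists_mem_nagataTransform x ha hK)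
    hfg hreg m hrad C hC C' hC'
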